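/- arXiv:gr-qc/0310040 — 3 statements merged into one kernel-verified Lean document; each statement's English description precedes it below -/
import Mathlib

section
/- Decay of the outgoing derivative for the characteristic problem Γ: Fix α > 1 and suppose R satisfies R ≥ 1, R > (4α/(α−1))², R > α⁻²(1 + 16α⁴M)², R > 8α²M/log α, 6α²C² < (α−1)MR, and R > 4α²M/(α−1). Let (r, m, φ) be a solution on D satisfying the characteristic initial conditions with parameters C, M, m₀, and suppose in addition that there is C̃ > 0 with |λφ + θ|(−R, v) ≤ C̃/v² for all v ≥ R. Then |λφ + θ|(u, v) ≤ (C̃ + 16α⁴MC)/v² at every point (u, v) ∈ D. -/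
/-! With `λ = ∂_v r`, `ν = ∂_u r` and `w = 2m/((1-μ)r²)`, the system says `∂_u λ = λνw`,
`∂_v ν = νλw`, and cancellation of the terms of first order in `φ` gives
`∂_v(∂_u(rφ)) = φ·∂_v ν` and `∂_u(∂_v(rφ)) = φ·∂_u λ` (`EFSol.psi_v`, `EFSol.chi_u`).

*Signs.* Since `r - 2m` never vanishes and is positive on `v = R`, it is positive on the past set
`D`.  The linear equations for `λ` and `ν` preserve signs, so `λ > 0 > ν`; hence `m` is monotone
in both variables and nonnegative, `ν ≤ -1`, and `r ≥ max(-u, v)`.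

*Bootstrap.* The remaining input is `m < αM` and `|rφ| < 2αC` (`Good`).  Where these hold,
`w ≤ 2α²M/r²`, so Grönwall in the form of the monotonicity of `ν·exp(2α²M/r)` gives `|ν| ≤ α`.
Integrating in `v` with the exact primitive of `λ/r³` bounds `∂_u(rφ)` by `C(1+2α⁴M)/u²`;
integrating that in `u` from `u = -R` gives `|rφ| < 2αC`, and integrating `∂_u m`, with
`ζ = ∂_u(rφ) - νφ` and the exact primitive of `ν/r²`, gives `m < αM` (`good_step`).  A violation
with maximal `u` in a compact past rectangle is thus impossible (`good_all`).

*Conclusion.* With the bounds on all of `D` one also has `λ ≤ α`, and integrating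
`∂_u(λφ + θ) = φ·∂_u λ` from `u = -R`, with the exact primitive of `ν/r³` and `r(-R,v) = v`,
costs at most `2α⁴MC/v²`.
-/


open Set Real

noncomputable section

/-- The quadrant `Q_R = (-∞, -R] × [R, ∞)` in null coordinates `(u, v)`. -/
def Quad (R : ℝ) : Set (ℝ × ℝ) := Iic (-R) ×ˢ Ici R

/-- Partial derivative in the `u` (first) direction, within the set `D`. -/
def pdu (D : Set (ℝ × ℝ)) (f : ℝ × ℝ → ℝ) (p : ℝ × ℝ) : ℝ :=
  fderivWithin ℝ f D p (1, 0)

/-- Partial derivative in the `v` (second) direction, within the set `D`. -/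
def pdv (D : Set (ℝ × ℝ)) (f : ℝ × ℝ → ℝ) (p : ℝ × ℝ) : ℝ :=
  fderivWithin ℝ f D p (0, 1)

/-- `D` is a past set in `Q_R`: with `(u,v) ∈ D`, any `(ũ,ṽ) ∈ Q_R` with
`ũ ≥ u`, `ṽ ≤ v` lies in `D`. -/
def IsPastSet (R : ℝ) (D : Set (ℝ × ℝ)) : Prop :=
  ∀ p ∈ D, ∀ q ∈ Quad R, p.1 ≤ q.1 → q.2 ≤ p.2 → q ∈ D

/-- A solution of the spherically symmetric Einstein–scalar field system on a
relatively open subset `D ⊆ Q_R`.  Writing `ν = ∂r/∂u`, `λ = ∂r/∂v`,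
`ζ = r ∂φ/∂u`, `θ = r ∂φ/∂v`, `μ = 2m/r`, the equations are:
`∂λ/∂u = λ (2ν/(1-μ)) (m/r²)`, `∂ν/∂v = ν (2λ/(1-μ)) (m/r²)`,
`ν ∂m/∂u = ½(1-μ)ζ²`, `λ ∂m/∂v = ½(1-μ)θ²`,
`∂θ/∂u = -ζλ/r`, `∂ζ/∂v = -θν/r`. -/
structure EFSol (R : ℝ) (D : Set (ℝ × ℝ)) (r m φ : ℝ × ℝ → ℝ) : Prop where
  subset : D ⊆ Quad R
  relOpen : ∃ U : Set (ℝ × ℝ), IsOpen U ∧ D = U ∩ Quad R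
  hr : ContDiffOn ℝ 2 r D
  hm : ContDiffOn ℝ 2 m D
  hphi : ContDiffOn ℝ 2 φ D
  rpos : ∀ p ∈ D, 0 < r p
  mu_ne : ∀ p ∈ D, 2 * m p ≠ r p
  eq_lam : ∀ p ∈ D, pdu D (fun q => pdv D r q) p
      = pdv D r p * (2 * pdu D r p / (1 - 2 * m p / r p)) * (m p / (r p) ^ 2)
  eq_nu : ∀ p ∈ D, pdv D (fun q => pdu D r q) p
      = pdu D r p * (2 * pdv D r p / (1 - 2 * m p / r p)) * (m p / (r p) ^ 2)
  eq_mu : ∀ p ∈ D, pdu D r p * pdu D m p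
      = (1 / 2) * (1 - 2 * m p / r p) * (r p * pdu D φ p) ^ 2
  eq_mv : ∀ p ∈ D, pdv D r p * pdv D m p
      = (1 / 2) * (1 - 2 * m p / r p) * (r p * pdv D φ p) ^ 2
  eq_theta : ∀ p ∈ D, pdu D (fun q => r q * pdv D φ q) p
      = -(r p * pdu D φ p) * pdv D r p / r p
  eq_zeta : ∀ p ∈ D, pdv D (fun q => r q * pdu D φ q) p
      = -(r p * pdv D φ p) * pdu D r p / r p

/-- Characteristic initial conditions with parameters `C`, `M`, `m₀`, posed on the
rays `{-R} × [R,∞)` (where `λ = 1`, `|rφ| ≤ C`, `m ≤ M`) and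
`(-∞,-R] × {R}` (where `ν = -1`, `|∂_u(rφ)| ≤ C/u²`, `m ≤ M`), with
`r(-R,R) = R` and `m(-R,R) = m₀`, on a past set `D`. -/
structure CharIC (R C M m₀ : ℝ) (D : Set (ℝ × ℝ)) (r m φ : ℝ × ℝ → ℝ) : Prop where
  past : IsPastSet R D
  ray_out : ∀ v ≥ R, ((-R, v) : ℝ × ℝ) ∈ D
  ray_in : ∀ u ≤ -R, ((u, R) : ℝ × ℝ) ∈ D
  r_corner : r (-R, R) = R
  m_corner : m (-R, R) = m₀
  lam_one : ∀ v ≥ R, pdv D r (-R, v) = 1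
  rphi_bound : ∀ v ≥ R, |r (-R, v) * φ (-R, v)| ≤ C
  m_bound_out : ∀ v ≥ R, m (-R, v) ≤ M
  nu_one : ∀ u ≤ -R, pdu D r (u, R) = -1
  durphi_bound : ∀ u ≤ -R, |pdu D (fun q => r q * φ q) (u, R)| ≤ C / u ^ 2
  m_bound_in : ∀ u ≤ -R, m (u, R) ≤ M

end

open Set Real

/-! ### Calculus along characteristic segments -/

/-- Restricting to a segment in the `u`-direction turns `pdu` into an ordinary derivative. -/
lemma hasDeriv_row {D : Set (ℝ × ℝ)} {f : ℝ × ℝ → ℝ} {a b s v : ℝ}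
    (hd : DifferentiableWithinAt ℝ f D (s, v)) (hseg : ∀ x ∈ Icc a b, (x, v) ∈ D) :
    HasDerivWithinAt (fun x => f (x, v)) (pdu D f (s, v)) (Icc a b) s := by
  have h1 : HasDerivWithinAt (fun x : ℝ => ((x, v) : ℝ × ℝ)) (1, 0) (Icc a b) s :=
    (hasDerivWithinAt_id s _).prodMk (hasDerivWithinAt_const s _ v)
  exact hd.hasFDerivWithinAt.comp_hasDerivWithinAt s h1 hseg

/-- Restricting to a segment in the `v`-direction turns `pdv` into an ordinary derivative. -/
lemma hasDeriv_col {D : Set (ℝ × ℝ)} {f : ℝ × ℝ → ℝ} {a b u s : ℝ}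
    (hd : DifferentiableWithinAt ℝ f D (u, s)) (hseg : ∀ x ∈ Icc a b, (u, x) ∈ D) :
    HasDerivWithinAt (fun x => f (u, x)) (pdv D f (u, s)) (Icc a b) s := by
  have h1 : HasDerivWithinAt (fun x : ℝ => ((u, x) : ℝ × ℝ)) (0, 1) (Icc a b) s :=
    (hasDerivWithinAt_const s _ u).prodMk (hasDerivWithinAt_id s _)
  exact hd.hasFDerivWithinAt.comp_hasDerivWithinAt s h1 hseg

lemma le_of_deriv_nonneg {g g' : ℝ → ℝ} {a b : ℝ} (hab : a ≤ b)
    (hg : ∀ x ∈ Icc a b, HasDerivWithinAt g (g' x) (Icc a b) x)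
    (hpos : ∀ x ∈ Ioo a b, 0 ≤ g' x) : g a ≤ g b := by
  have hmono : MonotoneOn g (Icc a b) := by
    refine monotoneOn_of_deriv_nonneg (convex_Icc a b)
      (fun x hx => (hg x hx).continuousWithinAt) ?_ ?_
    · intro x hx
      exact ((hg x (interior_subset hx)).mono interior_subset).differentiableWithinAt
    · intro x hx
      rw [interior_Icc] at hx
      rw [((hg x (Ioo_subset_Icc_self hx)).hasDerivAt (Icc_mem_nhds hx.1 hx.2)).deriv]
      exact hpos x hx
  exact hmono (left_mem_Icc.2 hab) (right_mem_Icc.2 hab) hab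

/-- Comparison of increments; it stands in for estimating an integral of `f'` by one of `G'`,
without any integrability considerations. -/
lemma abs_sub_le_of_deriv_le {f f' G G' : ℝ → ℝ} {a b : ℝ} (hab : a ≤ b)
    (hf : ∀ x ∈ Icc a b, HasDerivWithinAt f (f' x) (Icc a b) x)
    (hG : ∀ x ∈ Icc a b, HasDerivWithinAt G (G' x) (Icc a b) x)
    (hle : ∀ x ∈ Ioo a b, |f' x| ≤ G' x) : |f b - f a| ≤ G b - G a := by
  have h1 := le_of_deriv_nonneg hab (fun x hx => (hG x hx).sub (hf x hx))
    (fun x hx => by linarith [(abs_le.1 (hle x hx)).2])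
  have h2 := le_of_deriv_nonneg hab (fun x hx => (hG x hx).add (hf x hx))
    (fun x hx => by linarith [(abs_le.1 (hle x hx)).1])
  simp only [Pi.sub_apply, Pi.add_apply] at h1 h2
  rw [abs_le]
  constructor <;> linarith

lemma pos_of_ne_zero_of_endpoint {g : ℝ → ℝ} {a b c : ℝ} (hg : ContinuousOn g (Icc a b))
    (hc : c ∈ Icc a b) (hpos : 0 < g c) (hne : ∀ x ∈ Icc a b, g x ≠ 0) :
    ∀ x ∈ Icc a b, 0 < g x := by
  intro x hx
  by_contra hcon
  push Not at hcon
  have himg : (0 : ℝ) ∈ g '' Icc a b :=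
    (isPreconnected_Icc.image g hg).ordConnected.out (mem_image_of_mem g hx)
      (mem_image_of_mem g hc) ⟨hcon, hpos.le⟩
  obtain ⟨y, hy, hy0⟩ := himg
  exact hne y hy hy0

/-- A solution of the linear equation `g' = g h` with `|h| ≤ L` vanishes at one endpoint iff it
vanishes at the other, because `g² exp(±2Lx)` is monotone. -/
lemma ode_ne_zero_iff {g h : ℝ → ℝ} {a b L : ℝ} (hab : a ≤ b)
    (hg : ∀ x ∈ Icc a b, HasDerivWithinAt g (g x * h x) (Icc a b) x)
    (hL : ∀ x ∈ Icc a b, |h x| ≤ L) : g a ≠ 0 ↔ g b ≠ 0 := by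
  have hexp : ∀ (c : ℝ), ∀ x ∈ Icc a b,
      HasDerivWithinAt (fun x => exp (c * x)) (exp (c * x) * c) (Icc a b) x := by
    intro c x _
    have := ((hasDerivAt_id x).const_mul c).exp.hasDerivWithinAt (s := Icc a b)
    simpa using this
  have h1 := le_of_deriv_nonneg hab
    (fun x hx => ((hg x hx).mul (hg x hx)).mul (hexp (2 * L) x hx)) (by
      intro x hx
      have := (abs_le.1 (hL x (Ioo_subset_Icc_self hx))).1
      have : 0 ≤ 2 * (g x ^ 2 * exp (2 * L * x)) * (h x + L) :=
        mul_nonneg (by positivity) (by linarith)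
      simp only [Pi.mul_apply]
      linarith)
  have h2 := le_of_deriv_nonneg hab
    (fun x hx => (((hg x hx).mul (hg x hx)).mul (hexp (-(2 * L)) x hx)).neg) (by
      intro x hx
      have := (abs_le.1 (hL x (Ioo_subset_Icc_self hx))).2
      have : 0 ≤ 2 * (g x ^ 2 * exp (-(2 * L) * x)) * (L - h x) :=
        mul_nonneg (by positivity) (by linarith)
      simp only [Pi.mul_apply]
      linarith)
  simp only [Pi.mul_apply, Pi.neg_apply] at h1 h2
  constructor
  · intro ha hb
    rw [hb] at h1
    have : 0 < g a * g a * exp (2 * L * a) := mul_pos (mul_self_pos.2 ha) (exp_pos _)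
    rw [mul_zero, zero_mul] at h1
    linarith
  · intro hb ha
    rw [ha] at h2
    have : 0 < g b * g b * exp (-(2 * L) * b) := mul_pos (mul_self_pos.2 hb) (exp_pos _)
    rw [mul_zero, zero_mul] at h2
    linarith

/-- Solutions of `g' = g h` with continuous `h` keep their sign. -/
lemma ode_pos {g h : ℝ → ℝ} {a b c : ℝ}
    (hg : ∀ x ∈ Icc a b, HasDerivWithinAt g (g x * h x) (Icc a b) x)
    (hh : ContinuousOn h (Icc a b)) (hc : c ∈ Icc a b) (hpos : 0 < g c) :
    ∀ x ∈ Icc a b, 0 < g x := by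
  obtain ⟨L, hL⟩ := isCompact_Icc.exists_bound_of_continuousOn hh
  refine pos_of_ne_zero_of_endpoint (fun x hx => (hg x hx).continuousWithinAt) hc hpos ?_
  intro x hx
  rcases le_total x c with hxc | hxc
  · have hsub : Icc x c ⊆ Icc a b := Icc_subset_Icc hx.1 hc.2
    exact (ode_ne_zero_iff hxc (fun y hy => (hg y (hsub hy)).mono hsub)
      (fun y hy => hL y (hsub hy))).2 hpos.ne'
  · have hsub : Icc c x ⊆ Icc a b := Icc_subset_Icc hc.1 hx.2
    exact (ode_ne_zero_iff hxc (fun y hy => (hg y (hsub hy)).mono hsub)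
      (fun y hy => hL y (hsub hy))).1 hpos.ne'

/-! ### Regularity and the equations in integrated form -/

/-- The common factor `2m / ((1 - μ) r²)` in the equations for `λ` and `ν`. -/
noncomputable def wfac (r m : ℝ × ℝ → ℝ) (p : ℝ × ℝ) : ℝ :=
  2 / (1 - 2 * m p / r p) * (m p / (r p) ^ 2)

section
variable {R C M m₀ : ℝ} {D : Set (ℝ × ℝ)} {r m φ : ℝ × ℝ → ℝ}

lemma EFSol.uniqueDiff (hsol : EFSol R D r m φ) : UniqueDiffOn ℝ D := by
  obtain ⟨U, hU, rfl⟩ := hsol.relOpen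
  have hQ : UniqueDiffOn ℝ (Quad R) := (uniqueDiffOn_Iic _).prod (uniqueDiffOn_Ici _)
  rw [inter_comm]
  exact hQ.inter hU

lemma contDiffOn_pdu {f : ℝ × ℝ → ℝ} (hD : UniqueDiffOn ℝ D) (hf : ContDiffOn ℝ 2 f D) :
    ContDiffOn ℝ 1 (pdu D f) D :=
  (hf.fderivWithin hD (m := 1) (by norm_num)).clm_apply contDiffOn_const

lemma contDiffOn_pdv {f : ℝ × ℝ → ℝ} (hD : UniqueDiffOn ℝ D) (hf : ContDiffOn ℝ 2 f D) :
    ContDiffOn ℝ 1 (pdv D f) D :=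
  (hf.fderivWithin hD (m := 1) (by norm_num)).clm_apply contDiffOn_const

lemma pdu_mul {f g : ℝ × ℝ → ℝ} {p : ℝ × ℝ} (hD : UniqueDiffOn ℝ D) (hp : p ∈ D)
    (hf : DifferentiableOn ℝ f D) (hg : DifferentiableOn ℝ g D) :
    pdu D (fun q => f q * g q) p = pdu D f p * g p + f p * pdu D g p := by
  unfold pdu
  rw [fderivWithin_fun_mul (hD p hp) (hf p hp) (hg p hp)]
  simp
  ring

lemma pdv_mul {f g : ℝ × ℝ → ℝ} {p : ℝ × ℝ} (hD : UniqueDiffOn ℝ D) (hp : p ∈ D)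
    (hf : DifferentiableOn ℝ f D) (hg : DifferentiableOn ℝ g D) :
    pdv D (fun q => f q * g q) p = pdv D f p * g p + f p * pdv D g p := by
  unfold pdv
  rw [fderivWithin_fun_mul (hD p hp) (hf p hp) (hg p hp)]
  simp
  ring

lemma pdu_add {f g : ℝ × ℝ → ℝ} {p : ℝ × ℝ} (hD : UniqueDiffOn ℝ D) (hp : p ∈ D)
    (hf : DifferentiableOn ℝ f D) (hg : DifferentiableOn ℝ g D) :
    pdu D (fun q => f q + g q) p = pdu D f p + pdu D g p := by
  unfold pdu
  rw [fderivWithin_fun_add (hD p hp) (hf p hp) (hg p hp)]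
  simp

lemma pdv_add {f g : ℝ × ℝ → ℝ} {p : ℝ × ℝ} (hD : UniqueDiffOn ℝ D) (hp : p ∈ D)
    (hf : DifferentiableOn ℝ f D) (hg : DifferentiableOn ℝ g D) :
    pdv D (fun q => f q + g q) p = pdv D f p + pdv D g p := by
  unfold pdv
  rw [fderivWithin_fun_add (hD p hp) (hf p hp) (hg p hp)]
  simp

lemma EFSol.lam_u (hsol : EFSol R D r m φ) {p : ℝ × ℝ} (hp : p ∈ D) :
    pdu D (pdv D r) p = pdv D r p * (pdu D r p * wfac r m p) := by
  have := hsol.eq_lam p hp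
  rw [this, wfac]
  ring

lemma EFSol.nu_v (hsol : EFSol R D r m φ) {p : ℝ × ℝ} (hp : p ∈ D) :
    pdv D (pdu D r) p = pdu D r p * (pdv D r p * wfac r m p) := by
  have := hsol.eq_nu p hp
  rw [this, wfac]
  ring

lemma EFSol.diff_r (hsol : EFSol R D r m φ) : DifferentiableOn ℝ r D :=
  hsol.hr.differentiableOn (by norm_num)

lemma EFSol.diff_m (hsol : EFSol R D r m φ) : DifferentiableOn ℝ m D :=
  hsol.hm.differentiableOn (by norm_num)

lemma EFSol.diff_phi (hsol : EFSol R D r m φ) : DifferentiableOn ℝ φ D :=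
  hsol.hphi.differentiableOn (by norm_num)

lemma EFSol.diff_nu (hsol : EFSol R D r m φ) : DifferentiableOn ℝ (pdu D r) D :=
  (contDiffOn_pdu hsol.uniqueDiff hsol.hr).differentiableOn (by norm_num)

lemma EFSol.diff_lam (hsol : EFSol R D r m φ) : DifferentiableOn ℝ (pdv D r) D :=
  (contDiffOn_pdv hsol.uniqueDiff hsol.hr).differentiableOn (by norm_num)

lemma EFSol.diff_phi_u (hsol : EFSol R D r m φ) : DifferentiableOn ℝ (pdu D φ) D :=
  (contDiffOn_pdu hsol.uniqueDiff hsol.hphi).differentiableOn (by norm_num)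

lemma EFSol.diff_phi_v (hsol : EFSol R D r m φ) : DifferentiableOn ℝ (pdv D φ) D :=
  (contDiffOn_pdv hsol.uniqueDiff hsol.hphi).differentiableOn (by norm_num)

lemma EFSol.cont_wfac (hsol : EFSol R D r m φ) : ContinuousOn (wfac r m) D := by
  have hr := hsol.diff_r.continuousOn
  have hm := hsol.diff_m.continuousOn
  have h0 : ∀ p ∈ D, r p ≠ 0 := fun p hp => (hsol.rpos p hp).ne'
  have h1 : ∀ p ∈ D, 1 - 2 * m p / r p ≠ 0 := by
    intro p hp h
    have h2 := h0 p hp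
    field_simp at h
    exact hsol.mu_ne p hp (by linarith)
  exact (continuousOn_const.div (continuousOn_const.sub
    ((continuousOn_const.mul hm).div hr h0)) h1).mul
    (hm.div (hr.pow 2) (fun p hp => pow_ne_zero 2 (h0 p hp)))

/-- The expanded form `νφ + ζ` of `∂_u(rφ)`. -/
noncomputable def psi (D : Set (ℝ × ℝ)) (r φ : ℝ × ℝ → ℝ) (q : ℝ × ℝ) : ℝ :=
  pdu D r q * φ q + r q * pdu D φ q

/-- The expanded form `λφ + θ` of `∂_v(rφ)`. -/
noncomputable def chi (D : Set (ℝ × ℝ)) (r φ : ℝ × ℝ → ℝ) (q : ℝ × ℝ) : ℝ :=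
  pdv D r q * φ q + r q * pdv D φ q

lemma EFSol.diff_psi (hsol : EFSol R D r m φ) : DifferentiableOn ℝ (psi D r φ) D :=
  (hsol.diff_nu.mul hsol.diff_phi).add (hsol.diff_r.mul hsol.diff_phi_u)

lemma EFSol.diff_chi (hsol : EFSol R D r m φ) : DifferentiableOn ℝ (chi D r φ) D :=
  (hsol.diff_lam.mul hsol.diff_phi).add (hsol.diff_r.mul hsol.diff_phi_v)

/-- The terms of first order in `φ` cancel: `∂_v(νφ + ζ) = φ ∂_v ν`. -/
lemma EFSol.psi_v (hsol : EFSol R D r m φ) {p : ℝ × ℝ} (hp : p ∈ D) :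
    pdv D (psi D r φ) p = φ p * (pdu D r p * (pdv D r p * wfac r m p)) := by
  have hD := hsol.uniqueDiff
  have h1 : pdv D (psi D r φ) p = pdv D (fun q => pdu D r q * φ q) p
      + pdv D (fun q => r q * pdu D φ q) p :=
    pdv_add hD hp (hsol.diff_nu.mul hsol.diff_phi) (hsol.diff_r.mul hsol.diff_phi_u)
  have h2 := pdv_mul hD hp hsol.diff_nu hsol.diff_phi
  rw [h1, h2, hsol.eq_zeta p hp, hsol.nu_v hp]
  have := (hsol.rpos p hp).ne'
  field_simp
  ring

/-- The terms of first order in `φ` cancel: `∂_u(λφ + θ) = φ ∂_u λ`. -/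
lemma EFSol.chi_u (hsol : EFSol R D r m φ) {p : ℝ × ℝ} (hp : p ∈ D) :
    pdu D (chi D r φ) p = φ p * (pdv D r p * (pdu D r p * wfac r m p)) := by
  have hD := hsol.uniqueDiff
  have h1 : pdu D (chi D r φ) p = pdu D (fun q => pdv D r q * φ q) p
      + pdu D (fun q => r q * pdv D φ q) p :=
    pdu_add hD hp (hsol.diff_lam.mul hsol.diff_phi) (hsol.diff_r.mul hsol.diff_phi_v)
  have h2 := pdu_mul hD hp hsol.diff_lam hsol.diff_phi
  rw [h1, h2, hsol.eq_theta p hp, hsol.lam_u hp]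
  have := (hsol.rpos p hp).ne'
  field_simp
  ring

lemma mem_row (hsol : EFSol R D r m φ) (hic : CharIC R C M m₀ D r m φ) {u v : ℝ}
    (hp : (u, v) ∈ D) : ∀ s ∈ Icc u (-R), (s, v) ∈ D := fun s hs =>
  hic.past _ hp (s, v) ⟨hs.2, (hsol.subset hp).2⟩ hs.1 le_rfl

lemma mem_col (hsol : EFSol R D r m φ) (hic : CharIC R C M m₀ D r m φ) {u v : ℝ}
    (hp : (u, v) ∈ D) : ∀ s ∈ Icc R v, (u, s) ∈ D := fun s hs =>
  hic.past _ hp (u, s) ⟨(hsol.subset hp).1, hs.1⟩ le_rfl hs.2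

/-! ### Signs and lower bounds that need no smallness of `φ` -/

lemma r_out (hic : CharIC R C M m₀ D r m φ) (hsol : EFSol R D r m φ) {v : ℝ} (hv : R ≤ v) :
    r (-R, v) = v := by
  have hseg : ∀ s ∈ Icc R v, (-R, s) ∈ D := fun s hs => hic.ray_out s hs.1
  have h := abs_sub_le_of_deriv_le (G := fun _ => 0) (G' := fun _ => 0) hv
    (fun s hs => (hasDeriv_col (hsol.diff_r _ (hseg s hs)) hseg).sub (hasDerivWithinAt_id s _))
    (fun s _ => hasDerivWithinAt_const s _ 0)
    (fun s hs => by simp [hic.lam_one s hs.1.le])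
  simp only [Pi.sub_apply, hic.r_corner, id] at h
  have := abs_nonpos_iff.1 (h.trans_eq (sub_zero 0))
  linarith

lemma r_in (hic : CharIC R C M m₀ D r m φ) (hsol : EFSol R D r m φ) {u : ℝ} (hu : u ≤ -R) :
    r (u, R) = -u := by
  have hseg : ∀ s ∈ Icc u (-R), (s, R) ∈ D := fun s hs => hic.ray_in s hs.2
  have h := abs_sub_le_of_deriv_le (G := fun _ => 0) (G' := fun _ => 0) hu
    (fun s hs => (hasDeriv_row (hsol.diff_r _ (hseg s hs)) hseg).add (hasDerivWithinAt_id s _))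
    (fun s _ => hasDerivWithinAt_const s _ 0)
    (fun s hs => by simp [hic.nu_one s hs.2.le])
  simp only [Pi.add_apply, hic.r_corner, id] at h
  have := abs_nonpos_iff.1 (h.trans_eq (sub_zero 0))
  linarith

/-- There are no trapped surfaces: `r - 2m` is positive on `v = R` and never vanishes. -/
lemma no_trapped (hsol : EFSol R D r m φ) (hic : CharIC R C M m₀ D r m φ) (hMR : 2 * M < R)
    {u v : ℝ} (hp : (u, v) ∈ D) : 2 * m (u, v) < r (u, v) := by
  obtain ⟨hu, hv⟩ := hsol.subset hp
  simp only [mem_Iic, mem_Ici] at hu hv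
  have hcol := mem_col hsol hic hp
  have hmaps : MapsTo (fun s : ℝ => ((u, s) : ℝ × ℝ)) (Icc R v) D := hcol
  have hcont : ContinuousOn (fun s => r (u, s) - 2 * m (u, s)) (Icc R v) :=
    (hsol.diff_r.continuousOn.sub (continuousOn_const.mul hsol.diff_m.continuousOn)).comp
      (by fun_prop) hmaps
  have := pos_of_ne_zero_of_endpoint hcont (left_mem_Icc.2 hv)
    (by rw [r_in hic hsol hu]; linarith [hic.m_bound_in u hu])
    (fun s hs h => hsol.mu_ne _ (hcol s hs) (by linarith)) v (right_mem_Icc.2 hv)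
  linarith

lemma lam_pos (hsol : EFSol R D r m φ) (hic : CharIC R C M m₀ D r m φ)
    {u v : ℝ} (hp : (u, v) ∈ D) : 0 < pdv D r (u, v) := by
  obtain ⟨hu, hv⟩ := hsol.subset hp
  simp only [mem_Iic, mem_Ici] at hu hv
  have hrow := mem_row hsol hic hp
  have hcont : ContinuousOn (fun s => pdu D r (s, v) * wfac r m (s, v)) (Icc u (-R)) :=
    (hsol.diff_nu.continuousOn.mul hsol.cont_wfac).comp (f := fun s : ℝ => ((s, v) : ℝ × ℝ))
      (by fun_prop) hrow
  refine ode_pos (g := fun s => pdv D r (s, v)) (fun s hs => ?_) hcont (right_mem_Icc.2 hu) ?_ u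
    (left_mem_Icc.2 hu)
  · rw [← hsol.lam_u (hrow s hs)]
    exact hasDeriv_row (hsol.diff_lam _ (hrow s hs)) hrow
  · simp [hic.lam_one v hv]

lemma nu_neg (hsol : EFSol R D r m φ) (hic : CharIC R C M m₀ D r m φ)
    {u v : ℝ} (hp : (u, v) ∈ D) : pdu D r (u, v) < 0 := by
  obtain ⟨hu, hv⟩ := hsol.subset hp
  simp only [mem_Iic, mem_Ici] at hu hv
  have hcol := mem_col hsol hic hp
  have hcont : ContinuousOn (fun s => pdv D r (u, s) * wfac r m (u, s)) (Icc R v) :=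
    (hsol.diff_lam.continuousOn.mul hsol.cont_wfac).comp (f := fun s : ℝ => ((u, s) : ℝ × ℝ))
      (by fun_prop) hcol
  have := ode_pos (g := fun s => -pdu D r (u, s)) (fun s hs => ?_) hcont (left_mem_Icc.2 hv) ?_ v
    (right_mem_Icc.2 hv)
  · linarith
  · rw [neg_mul, ← hsol.nu_v (hcol s hs)]
    exact (hasDeriv_col (hsol.diff_nu _ (hcol s hs)) hcol).neg
  · simp [hic.nu_one u hu]

lemma r_ge_neg_u (hsol : EFSol R D r m φ) (hic : CharIC R C M m₀ D r m φ)
    {u v : ℝ} (hp : (u, v) ∈ D) : -u ≤ r (u, v) := by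
  obtain ⟨hu, hv⟩ := hsol.subset hp
  have hcol := mem_col hsol hic hp
  rw [← r_in hic hsol hu]
  exact le_of_deriv_nonneg hv (fun s hs => hasDeriv_col (hsol.diff_r _ (hcol s hs)) hcol)
    (fun s hs => (lam_pos hsol hic (hcol s (Ioo_subset_Icc_self hs))).le)

lemma r_ge_v (hsol : EFSol R D r m φ) (hic : CharIC R C M m₀ D r m φ)
    {u v : ℝ} (hp : (u, v) ∈ D) : v ≤ r (u, v) := by
  obtain ⟨hu, hv⟩ := hsol.subset hp
  have hrow := mem_row hsol hic hp
  have h := le_of_deriv_nonneg hu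
    (fun s hs => (hasDeriv_row (hsol.diff_r _ (hrow s hs)) hrow).neg)
    (fun s hs => by linarith [nu_neg hsol hic (hrow s (Ioo_subset_Icc_self hs))])
  simp only [Pi.neg_apply, r_out hic hsol hv] at h
  linarith

lemma one_sub_mu_pos (hsol : EFSol R D r m φ) (hic : CharIC R C M m₀ D r m φ) (hMR : 2 * M < R)
    {p : ℝ × ℝ} (hp : p ∈ D) : 0 < 1 - 2 * m p / r p := by
  have h1 := hsol.rpos p hp
  have h2 := no_trapped hsol hic hMR hp
  rw [sub_pos, div_lt_one h1]
  exact h2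

lemma m_nonneg (hsol : EFSol R D r m φ) (hic : CharIC R C M m₀ D r m φ) (hMR : 2 * M < R)
    (hm₀ : 0 ≤ m₀) {u v : ℝ} (hp : (u, v) ∈ D) : 0 ≤ m (u, v) := by
  obtain ⟨hu, hv⟩ := hsol.subset hp
  simp only [mem_Iic, mem_Ici] at hu hv
  have hrow := mem_row hsol hic hp
  have hcol : ∀ s ∈ Icc R v, (-R, s) ∈ D := fun s hs => hic.ray_out s hs.1
  have h1 := le_of_deriv_nonneg hu
    (fun s hs => (hasDeriv_row (hsol.diff_m _ (hrow s hs)) hrow).neg) (by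
      intro s hs
      have hs' := hrow s (Ioo_subset_Icc_self hs)
      have hnu := nu_neg hsol hic hs'
      have heq := hsol.eq_mu _ hs'
      have hmu := one_sub_mu_pos hsol hic hMR hs'
      by_contra hcon
      push Not at hcon
      have h3 : pdu D r (s, v) * pdu D m (s, v) < 0 :=
        mul_neg_of_neg_of_pos hnu (by linarith)
      rw [heq] at h3
      exact absurd h3 (not_lt.2 (by positivity)))
  have h2 := le_of_deriv_nonneg hv
    (fun s hs => (hasDeriv_col (hsol.diff_m _ (hcol s hs)) hcol)) (by
      intro s hs
      have hs' := hcol s (Ioo_subset_Icc_self hs)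
      have heq := hsol.eq_mv _ hs'
      have hmu := one_sub_mu_pos hsol hic hMR hs'
      rw [hic.lam_one s hs.1.le, one_mul] at heq
      rw [heq]
      positivity)
  simp only [Pi.neg_apply, hic.m_corner] at h1 h2
  linarith

lemma wfac_nonneg (hsol : EFSol R D r m φ) (hic : CharIC R C M m₀ D r m φ) (hMR : 2 * M < R)
    (hm₀ : 0 ≤ m₀) {u v : ℝ} (hp : (u, v) ∈ D) : 0 ≤ wfac r m (u, v) := by
  have h1 := one_sub_mu_pos hsol hic hMR hp
  have h2 := m_nonneg hsol hic hMR hm₀ hp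
  unfold wfac
  positivity

lemma nu_le_neg_one (hsol : EFSol R D r m φ) (hic : CharIC R C M m₀ D r m φ) (hMR : 2 * M < R)
    (hm₀ : 0 ≤ m₀) {u v : ℝ} (hp : (u, v) ∈ D) : pdu D r (u, v) ≤ -1 := by
  obtain ⟨hu, hv⟩ := hsol.subset hp
  have hcol := mem_col hsol hic hp
  have h := le_of_deriv_nonneg hv
    (fun s hs => (hasDeriv_col (hsol.diff_nu _ (hcol s hs)) hcol).neg) (by
      intro s hs
      have hs' := hcol s (Ioo_subset_Icc_self hs)
      have h1 := nu_neg hsol hic hs'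
      have h2 := mul_nonneg (lam_pos hsol hic hs').le (wfac_nonneg hsol hic hMR hm₀ hs')
      rw [hsol.nu_v hs']
      nlinarith)
  simp only [Pi.neg_apply, hic.nu_one u hu] at h
  linarith

/-! ### Estimates under the bootstrap bounds -/

/-- The bootstrap bounds `m < αM`, `|rφ| < 2αC` at a point. -/
def Good (α C M : ℝ) (r m φ : ℝ × ℝ → ℝ) (p : ℝ × ℝ) : Prop :=
  m p < α * M ∧ |r p * φ p| < 2 * α * C

lemma wfac_le {α : ℝ} (hsol : EFSol R D r m φ) (hic : CharIC R C M m₀ D r m φ)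
    (hα : 1 < α) (hM : 0 < M) (hMR : 2 * M < R) (hm₀ : 0 ≤ m₀)
    (hR6 : 4 * α ^ 2 * M < R * (α - 1))
    {u v : ℝ} (hp : (u, v) ∈ D) (hg : m (u, v) < α * M) :
    wfac r m (u, v) ≤ 2 * α ^ 2 * M / r (u, v) ^ 2 := by
  have hr := hsol.rpos _ hp
  have hv : R ≤ v := (hsol.subset hp).2
  have hrv := r_ge_v hsol hic hp
  have hm := m_nonneg hsol hic hMR hm₀ hp
  have h1 : 1 / α ≤ 1 - 2 * m (u, v) / r (u, v) := by
    rw [le_sub_iff_add_le, div_add_div _ _ (by positivity) hr.ne', div_le_one (by positivity)]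
    nlinarith [mul_le_mul_of_nonneg_right (hv.trans hrv) (sub_nonneg.2 hα.le)]
  have h2 : 2 / (1 - 2 * m (u, v) / r (u, v)) ≤ 2 * α := by
    rw [div_le_iff₀ (lt_of_lt_of_le (by positivity) h1)]
    calc (2 : ℝ) = 2 * α * (1 / α) := by field_simp
      _ ≤ _ := by gcongr
  unfold wfac
  calc _ ≤ 2 * α * (α * M / r (u, v) ^ 2) := by gcongr
    _ = _ := by ring

lemma hasDeriv_exp_inv {f : ℝ → ℝ} {f' k : ℝ} {S : Set ℝ} {s : ℝ}
    (hf : HasDerivWithinAt f f' S s) (h0 : f s ≠ 0) :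
    HasDerivWithinAt (fun x => exp (k / f x)) (-(exp (k / f s) * (k * f' / f s ^ 2))) S s := by
  have := ((hasDerivWithinAt_const s S k).div hf h0).exp
  simp only [Pi.div_apply] at this
  convert this using 1
  ring

/-- `ν exp(k/r)` is monotone in `v` along a column on which `m < αM`, with `k = 2α²M`. -/
lemma nu_bound {α : ℝ} (hsol : EFSol R D r m φ) (hic : CharIC R C M m₀ D r m φ)
    (hα : 1 < α) (hM : 0 < M) (hR : 0 < R) (hMR : 2 * M < R) (hm₀ : 0 ≤ m₀)
    (hR6 : 4 * α ^ 2 * M < R * (α - 1)) (hR4 : exp (2 * α ^ 2 * M / R) ≤ α)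
    {u v : ℝ} (hp : (u, v) ∈ D) (hg : ∀ s ∈ Icc R v, m (u, s) < α * M) :
    -pdu D r (u, v) ≤ α := by
  obtain ⟨hu, hv⟩ := hsol.subset hp
  simp only [mem_Iic, mem_Ici] at hu hv
  have hcol := mem_col hsol hic hp
  have h := le_of_deriv_nonneg hv
    (fun s hs => (hasDeriv_col (hsol.diff_nu _ (hcol s hs)) hcol).mul
      (hasDeriv_exp_inv (k := 2 * α ^ 2 * M)
        (hasDeriv_col (hsol.diff_r _ (hcol s hs)) hcol) (hsol.rpos _ (hcol s hs)).ne')) (by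
      intro s hs
      have hs0 := Ioo_subset_Icc_self hs
      have hs' := hcol s hs0
      have h1 := nu_neg hsol hic hs'
      have h2 := lam_pos hsol hic hs'
      have h3 := wfac_le hsol hic hα hM hMR hm₀ hR6 hs' (hg s hs0)
      have h4 : 0 ≤ (-pdu D r (u, s)) * pdv D r (u, s) * exp (2 * α ^ 2 * M / r (u, s))
          * (2 * α ^ 2 * M / r (u, s) ^ 2 - wfac r m (u, s)) :=
        mul_nonneg (mul_nonneg (mul_nonneg (by linarith) h2.le) (exp_pos _).le) (by linarith)
      rw [hsol.nu_v hs']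
      calc _ ≤ _ := h4
        _ = _ := by ring)
  simp only [Pi.mul_apply, hic.nu_one u hu, r_in hic hsol hu] at h
  have h5 : exp (2 * α ^ 2 * M / -u) ≤ exp (2 * α ^ 2 * M / R) := by
    apply exp_le_exp.2
    gcongr
    linarith
  have h6 : 1 ≤ exp (2 * α ^ 2 * M / r (u, v)) :=
    one_le_exp (by have := hsol.rpos _ hp; positivity)
  nlinarith [nu_neg hsol hic hp]

/-- `λ exp(k/r)` is monotone in `u` along a row on which `m < αM`, with `k = 2α²M`. -/
lemma lam_bound {α : ℝ} (hsol : EFSol R D r m φ) (hic : CharIC R C M m₀ D r m φ)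
    (hα : 1 < α) (hM : 0 < M) (hR : 0 < R) (hMR : 2 * M < R) (hm₀ : 0 ≤ m₀)
    (hR6 : 4 * α ^ 2 * M < R * (α - 1)) (hR4 : exp (2 * α ^ 2 * M / R) ≤ α)
    {u v : ℝ} (hp : (u, v) ∈ D) (hg : ∀ s ∈ Icc u (-R), m (s, v) < α * M) :
    pdv D r (u, v) ≤ α := by
  obtain ⟨hu, hv⟩ := hsol.subset hp
  simp only [mem_Iic, mem_Ici] at hu hv
  have hrow := mem_row hsol hic hp
  have h := le_of_deriv_nonneg hu
    (fun s hs => (hasDeriv_row (hsol.diff_lam _ (hrow s hs)) hrow).mul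
      (hasDeriv_exp_inv (k := 2 * α ^ 2 * M)
        (hasDeriv_row (hsol.diff_r _ (hrow s hs)) hrow) (hsol.rpos _ (hrow s hs)).ne')) (by
      intro s hs
      have hs0 := Ioo_subset_Icc_self hs
      have hs' := hrow s hs0
      have h1 := nu_neg hsol hic hs'
      have h2 := lam_pos hsol hic hs'
      have h3 := wfac_le hsol hic hα hM hMR hm₀ hR6 hs' (hg s hs0)
      have h4 : 0 ≤ (-pdu D r (s, v)) * pdv D r (s, v) * exp (2 * α ^ 2 * M / r (s, v))
          * (2 * α ^ 2 * M / r (s, v) ^ 2 - wfac r m (s, v)) :=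
        mul_nonneg (mul_nonneg (mul_nonneg (by linarith) h2.le) (exp_pos _).le) (by linarith)
      rw [hsol.lam_u hs']
      calc _ ≤ _ := h4
        _ = _ := by ring)
  simp only [Pi.mul_apply, hic.lam_one v hv, r_out hic hsol hv] at h
  have h5 : exp (2 * α ^ 2 * M / v) ≤ exp (2 * α ^ 2 * M / R) := by
    apply exp_le_exp.2
    gcongr
  have h6 : 1 ≤ exp (2 * α ^ 2 * M / r (u, v)) :=
    one_le_exp (by have := hsol.rpos _ hp; positivity)
  nlinarith [lam_pos hsol hic hp]

lemma hasDeriv_inv_sq {f : ℝ → ℝ} {f' k : ℝ} {S : Set ℝ} {s : ℝ}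
    (hf : HasDerivWithinAt f f' S s) (h0 : f s ≠ 0) :
    HasDerivWithinAt (fun x => k / f x ^ 2) (-(2 * k * f' / f s ^ 3)) S s := by
  have := (hasDerivWithinAt_const s S k).div (hf.pow 2) (pow_ne_zero 2 h0)
  have e : -(2 * k * f' / f s ^ 3)
      = (0 * f s ^ 2 - k * ((2 : ℕ) * f s ^ (2 - 1) * f')) / (f s ^ 2) ^ 2 := by
    push_cast
    field_simp
    ring
  rw [e]
  exact this

lemma hasDeriv_inv {f : ℝ → ℝ} {f' k : ℝ} {S : Set ℝ} {s : ℝ}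
    (hf : HasDerivWithinAt f f' S s) (h0 : f s ≠ 0) :
    HasDerivWithinAt (fun x => k / f x) (-(k * f' / f s ^ 2)) S s := by
  have := (hasDerivWithinAt_const s S k).div hf h0
  have e : -(k * f' / f s ^ 2) = (0 * f s - k * f') / f s ^ 2 := by ring
  rw [e]
  exact this

/-- Pointwise bound for the source term `φ λ ν · 2m/((1-μ)r²)` of both wave equations, where `x`
is the factor (`ν` or `λ`) to be estimated by `α` and `y` is the other one. -/
lemma source_bound {α k B x y w ρ f : ℝ} (hρ : 0 < ρ)
    (hα : 0 ≤ α) (hx : |x| ≤ α) (hw0 : 0 ≤ w) (hw : w ≤ k / ρ ^ 2) (hf : |ρ * f| ≤ B) :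
    |f * (x * (y * w))| ≤ α * k * B * |y| / ρ ^ 3 := by
  have h1 : |f| ≤ B / ρ := by
    rw [le_div_iff₀ hρ]
    rwa [abs_mul, abs_of_pos hρ, mul_comm] at hf
  have hB : 0 ≤ B := (abs_nonneg _).trans hf
  rw [abs_mul, abs_mul, abs_mul, abs_of_nonneg hw0]
  calc |f| * (|x| * (|y| * w)) ≤ (B / ρ) * (α * (|y| * (k / ρ ^ 2))) := by gcongr
    _ = _ := by field_simp

/-- `|∂_u(rφ)| ≤ C(1 + 2α⁴M)/u²`, by integrating the wave equation up a column. -/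
lemma psi_bound {α : ℝ} (hsol : EFSol R D r m φ) (hic : CharIC R C M m₀ D r m φ)
    (hα : 1 < α) (hC : 0 < C) (hM : 0 < M) (hR : 0 < R) (hMR : 2 * M < R) (hm₀ : 0 ≤ m₀)
    (hR6 : 4 * α ^ 2 * M < R * (α - 1)) (hR4 : exp (2 * α ^ 2 * M / R) ≤ α)
    {u v : ℝ} (hp : (u, v) ∈ D) (hg : ∀ s ∈ Icc R v, Good α C M r m φ (u, s)) :
    |psi D r φ (u, v)| ≤ C * (1 + 2 * α ^ 4 * M) / u ^ 2 := by
  obtain ⟨hu, hv⟩ := hsol.subset hp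
  simp only [mem_Iic, mem_Ici] at hu hv
  have hcol := mem_col hsol hic hp
  have h := abs_sub_le_of_deriv_le hv
    (fun s hs => hasDeriv_col (hsol.diff_psi _ (hcol s hs)) hcol)
    (fun s hs => hasDeriv_inv_sq (k := -(2 * α ^ 4 * M * C))
        (hasDeriv_col (hsol.diff_r _ (hcol s hs)) hcol) (hsol.rpos _ (hcol s hs)).ne') (by
      intro s hs
      have hs0 := Ioo_subset_Icc_self hs
      have hs' := hcol s hs0
      have h1 := nu_neg hsol hic hs'
      have h2 := lam_pos hsol hic hs'
      have h3 := wfac_le hsol hic hα hM hMR hm₀ hR6 hs' (hg s hs0).1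
      have h4 := nu_bound hsol hic hα hM hR hMR hm₀ hR6 hR4 hs'
        (fun t ht => (hg t ⟨ht.1, ht.2.trans hs0.2⟩).1)
      rw [hsol.psi_v hs']
      refine (source_bound (α := α) (hsol.rpos _ hs') (by positivity)
        (by rw [abs_of_neg h1]; exact h4) (wfac_nonneg hsol hic hMR hm₀ hs') h3
        (hg s hs0).2.le).trans (le_of_eq ?_)
      rw [abs_of_pos h2]
      ring)
  have h0 : |psi D r φ (u, R)| ≤ C / u ^ 2 := by
    have h1 := hic.durphi_bound u hu
    rwa [pdu_mul hsol.uniqueDiff (hic.ray_in u hu) hsol.diff_r hsol.diff_phi] at h1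
  rw [r_in hic hsol hu] at h
  have h5 : -(2 * α ^ 4 * M * C) / r (u, v) ^ 2 ≤ 0 :=
    div_nonpos_of_nonpos_of_nonneg (by simp only [neg_nonpos]; positivity) (sq_nonneg _)
  have h6 := abs_sub_abs_le_abs_sub (psi D r φ (u, v)) (psi D r φ (u, R))
  have h7 : C * (1 + 2 * α ^ 4 * M) / u ^ 2 = C / u ^ 2 - -(2 * α ^ 4 * M * C) / (-u) ^ 2 := by
    ring
  linarith

/-- The bootstrap step: the bounds propagate to `(u, v)` from the part `u' > u` of its past. -/
lemma good_step {α : ℝ} (hsol : EFSol R D r m φ) (hic : CharIC R C M m₀ D r m φ)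
    (hα : 1 < α) (hC : 0 < C) (hM : 0 < M) (hR : 0 < R) (hMR : 2 * M < R) (hm₀ : 0 ≤ m₀)
    (hR6 : 4 * α ^ 2 * M < R * (α - 1)) (hR4 : exp (2 * α ^ 2 * M / R) ≤ α)
    (hR5 : 6 * α ^ 2 * C ^ 2 < (α - 1) * M * R) (hR3 : 1 + 16 * α ^ 4 * M ≤ α * R)
    {u v : ℝ} (hp : (u, v) ∈ D)
    (hg : ∀ s t, u < s → s ≤ -R → t ∈ Icc R v → Good α C M r m φ (s, t)) :
    Good α C M r m φ (u, v) := by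
  obtain ⟨hu, hv⟩ := hsol.subset hp
  simp only [mem_Iic, mem_Ici] at hu hv
  have hrow := mem_row hsol hic hp
  have hα0 : 0 < α := by linarith
  set P : ℝ := C * (1 + 2 * α ^ 4 * M) with hP
  have hP0 : 0 < P := by positivity
  have hPR : P ≤ α * C * R := by
    have : 0 < α ^ 4 * M := by positivity
    rw [hP]
    nlinarith
  have hpsi : ∀ s ∈ Ioo u (-R), |psi D r φ (s, v)| ≤ P / s ^ 2 := fun s hs =>
    psi_bound hsol hic hα hC hM hR hMR hm₀ hR6 hR4 (hrow s (Ioo_subset_Icc_self hs))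
      (fun t ht => hg s t hs.1 hs.2.le ht)
  have hinv : ∀ k : ℝ, ∀ s ∈ Icc u (-R),
      HasDerivWithinAt (fun x => -k / x) (k / s ^ 2) (Icc u (-R)) s := by
    intro k s hs
    have hs0 : s ≠ 0 := by have := hs.2; intro h; linarith
    have := hasDeriv_inv (k := -k) (hasDerivWithinAt_id s (Icc u (-R))) hs0
    have e : k / s ^ 2 = -(-k * 1 / s ^ 2) := by ring
    rw [e]
    exact this
  have hu0 : u < 0 := by linarith
  refine ⟨?_, ?_⟩
  · have h := abs_sub_le_of_deriv_le hu
      (fun s hs => hasDeriv_row (hsol.diff_m _ (hrow s hs)) hrow)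
      (fun s hs => (hinv (α ^ 2 * C ^ 2) s hs).add (hasDeriv_inv (k := (2 * α * C) ^ 2)
        (hasDeriv_row (hsol.diff_r _ (hrow s hs)) hrow) (hsol.rpos _ (hrow s hs)).ne')) (by
        intro s hs
        have hs0 := Ioo_subset_Icc_self hs
        have hs' := hrow s hs0
        have hn := nu_le_neg_one hsol hic hMR hm₀ hs'
        have hmu := one_sub_mu_pos hsol hic hMR hs'
        have hr := hsol.rpos _ hs'
        have hmu1 : 1 - 2 * m (s, v) / r (s, v) ≤ 1 := by
          have := m_nonneg hsol hic hMR hm₀ hs'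
          have : 0 ≤ 2 * m (s, v) / r (s, v) := by positivity
          linarith
        have heq := hsol.eq_mu _ hs'
        have hψ := hpsi s hs
        have hgood := (hg s v hs.1 hs.2.le (right_mem_Icc.2 hv)).2
        have hsR : s < -R := hs.2
        have hsp : 0 < s ^ 2 := by nlinarith
        have hψ2 : psi D r φ (s, v) ^ 2 ≤ α ^ 2 * C ^ 2 / s ^ 2 := by
          have h1 : psi D r φ (s, v) ^ 2 ≤ (P / s ^ 2) ^ 2 :=
            sq_le_sq' (abs_le.1 hψ).1 (abs_le.1 hψ).2
          have h2 : P ^ 2 ≤ (α * C * R) ^ 2 := by gcongr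
          have h3 : R ^ 2 ≤ s ^ 2 := by nlinarith
          refine h1.trans ?_
          rw [div_pow, div_le_div_iff₀ (by positivity) hsp]
          calc P ^ 2 * s ^ 2 ≤ ((α * C) ^ 2 * s ^ 2) * s ^ 2 := by
                gcongr
                calc P ^ 2 ≤ (α * C * R) ^ 2 := h2
                  _ = (α * C) ^ 2 * R ^ 2 := by ring
                  _ ≤ _ := by gcongr
            _ = _ := by ring
        have hφ2 : φ (s, v) ^ 2 ≤ (2 * α * C) ^ 2 / r (s, v) ^ 2 := by
          rw [le_div_iff₀ (by positivity)]
          calc φ (s, v) ^ 2 * r (s, v) ^ 2 = (r (s, v) * φ (s, v)) ^ 2 := by ring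
            _ ≤ _ := sq_le_sq' (abs_le.1 hgood.le).1 (abs_le.1 hgood.le).2
        have hzeta : r (s, v) * pdu D φ (s, v)
            = psi D r φ (s, v) + (-pdu D r (s, v)) * φ (s, v) := by
          unfold psi; ring
        rw [hzeta] at heq
        generalize psi D r φ (s, v) = ψ at *
        generalize φ (s, v) = f at *
        generalize 1 - 2 * m (s, v) / r (s, v) = c at *
        obtain ⟨n, hn'⟩ : ∃ n, n = -pdu D r (s, v) := ⟨_, rfl⟩
        have hν : pdu D r (s, v) = -n := by linarith
        rw [hν] at heq hn ⊢
        have hn1 : 1 ≤ n := by linarith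
        have hnm : n * (-pdu D m (s, v)) = 1 / 2 * c * (ψ + n * f) ^ 2 := by
          rw [neg_neg] at heq
          linarith
        -- completes `(ψ + nf)² ≤ 2ψ² + 2n²f²` and uses `n ≥ 1` to divide by `n`
        have hup : -pdu D m (s, v) ≤ ψ ^ 2 + n * f ^ 2 := by
          refine le_of_mul_le_mul_left ?_ (show 0 < n by linarith)
          rw [hnm]
          have e1 : 1 / 2 * c * (ψ + n * f) ^ 2 ≤ 1 / 2 * 1 * (ψ + n * f) ^ 2 := by gcongr
          nlinarith [sq_nonneg (ψ - n * f), mul_le_mul_of_nonneg_right hn1 (sq_nonneg ψ)]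
        have hlow : 0 ≤ -pdu D m (s, v) := by
          refine nonneg_of_mul_nonneg_right (a := n) ?_ (by linarith)
          rw [hnm]
          positivity
        rw [← abs_neg, abs_of_nonneg hlow]
        have e2 : n * f ^ 2 ≤ n * ((2 * α * C) ^ 2 / r (s, v) ^ 2) := by gcongr
        calc _ ≤ _ := hup
          _ ≤ α ^ 2 * C ^ 2 / s ^ 2 + n * ((2 * α * C) ^ 2 / r (s, v) ^ 2) :=
            add_le_add hψ2 e2
          _ = _ := by ring)
    simp only [Pi.add_apply, r_out hic hsol hv] at h
    have h1 : 0 ≤ -(α ^ 2 * C ^ 2) / u :=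
      div_nonneg_of_nonpos (by simp only [neg_nonpos]; positivity) hu0.le
    have h2 : 0 ≤ (2 * α * C) ^ 2 / r (u, v) := div_nonneg (sq_nonneg _) (hsol.rpos _ hp).le
    have h3 : (2 * α * C) ^ 2 / v ≤ (2 * α * C) ^ 2 / R := by gcongr
    have h4 : α ^ 2 * C ^ 2 / R + (2 * α * C) ^ 2 / R < (α - 1) * M := by
      rw [← add_div, div_lt_iff₀ hR]
      have : 0 < α ^ 2 * C ^ 2 := by positivity
      nlinarith
    rw [neg_div_neg_eq] at h
    have h5 := (abs_le.1 h).1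
    have h6 := hic.m_bound_out v hv
    linarith
  · have h := abs_sub_le_of_deriv_le hu
      (fun s hs => hasDeriv_row ((hsol.diff_r.mul hsol.diff_phi) _ (hrow s hs)) hrow)
      (fun s hs => hinv P s hs) (by
        intro s hs
        have := pdu_mul hsol.uniqueDiff (hrow s (Ioo_subset_Icc_self hs)) hsol.diff_r
          hsol.diff_phi
        change |pdu D (fun q => r q * φ q) (s, v)| ≤ _
        rw [this]
        exact hpsi s hs)
    simp only [Pi.mul_apply, neg_div_neg_eq] at h
    have h1 : 0 ≤ -P / u := div_nonneg_of_nonpos (by linarith) hu0.le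
    have h2 : P / R ≤ α * C := by rwa [div_le_iff₀ hR]
    have h3 := hic.rphi_bound v hv
    have h4 := abs_sub_abs_le_abs_sub (r (u, v) * φ (u, v)) (r (-R, v) * φ (-R, v))
    rw [abs_sub_comm] at h4
    have h5 : C < α * C := by nlinarith
    linarith

/-- The bootstrap: on the compact past of a point, a violation with maximal `u` contradicts
`good_step`. -/
lemma good_all {α : ℝ} (hsol : EFSol R D r m φ) (hic : CharIC R C M m₀ D r m φ)
    (hα : 1 < α) (hC : 0 < C) (hM : 0 < M) (hR : 0 < R) (hMR : 2 * M < R) (hm₀ : 0 ≤ m₀)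
    (hR6 : 4 * α ^ 2 * M < R * (α - 1)) (hR4 : exp (2 * α ^ 2 * M / R) ≤ α)
    (hR5 : 6 * α ^ 2 * C ^ 2 < (α - 1) * M * R) (hR3 : 1 + 16 * α ^ 4 * M ≤ α * R)
    {p : ℝ × ℝ} (hp : p ∈ D) : Good α C M r m φ p := by
  obtain ⟨u₀, v₀⟩ := p
  obtain ⟨hu, hv⟩ := hsol.subset hp
  simp only [mem_Iic, mem_Ici] at hu hv
  have hKD : Icc u₀ (-R) ×ˢ Icc R v₀ ⊆ D := fun q hq =>
    hic.past _ hp q ⟨hq.1.2, hq.2.1⟩ hq.1.1 hq.2.2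
  by_contra hbad
  set F : ℝ × ℝ → ℝ := fun q => max (m q - α * M) (|r q * φ q| - 2 * α * C) with hF
  have hFiff : ∀ q, Good α C M r m φ q ↔ F q < 0 := by
    intro q
    simp [hF, Good]
  have hFc : ContinuousOn F (Icc u₀ (-R) ×ˢ Icc R v₀) :=
    ((hsol.diff_m.continuousOn.sub continuousOn_const).sup
      (((hsol.diff_r.continuousOn.mul hsol.diff_phi.continuousOn).abs).sub
        continuousOn_const)).mono hKD
  have hK : IsCompact (Icc u₀ (-R) ×ˢ Icc R v₀) := isCompact_Icc.prod isCompact_Icc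
  have hV : IsCompact ((Icc u₀ (-R) ×ˢ Icc R v₀) ∩ F ⁻¹' Ici 0) :=
    hK.of_isClosed_subset (hFc.preimage_isClosed_of_isClosed hK.isClosed isClosed_Ici)
      inter_subset_left
  have hne : ((Icc u₀ (-R) ×ˢ Icc R v₀) ∩ F ⁻¹' Ici 0).Nonempty :=
    ⟨(u₀, v₀), ⟨left_mem_Icc.2 hu, right_mem_Icc.2 hv⟩, not_lt.1 (fun h => hbad ((hFiff _).2 h))⟩
  obtain ⟨⟨u, v⟩, ⟨hqK, hqV⟩, hmax⟩ := hV.exists_isMaxOn hne continuous_fst.continuousOn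
  have hgood := good_step hsol hic hα hC hM hR hMR hm₀ hR6 hR4 hR5 hR3 (hKD hqK) (by
    intro s t hs hsR ht
    by_contra hst
    have hle := hmax (a := (s, t)) ⟨⟨⟨hqK.1.1.trans hs.le, hsR⟩, ⟨ht.1, ht.2.trans hqK.2.2⟩⟩,
      not_lt.1 (fun h => hst ((hFiff _).2 h))⟩
    exact absurd hs (not_lt.2 hle))
  exact absurd ((hFiff _).1 hgood) (not_lt.2 hqV)

end

/-! ### Decay of the outgoing derivative -/

/-- Decay of the outgoing derivative for the characteristic
problem `Γ`.  For `α > 1` and `R` large enough, if in addition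
`|λφ + θ|(-R,v) ≤ C̃/v²` for all `v ≥ R`, then
`|λφ + θ|(u,v) ≤ (C̃ + 16α⁴MC)/v²` throughout `D`. -/
theorem outgoing_decay (R C M m₀ α Ct : ℝ) (hα : 1 < α) (hC : 0 < C)
    (hM : 0 < M) (hm₀ : m₀ ∈ Icc 0 M) (hCt : 0 < Ct)
    (hR1 : 1 ≤ R) (hR2 : R > (4 * α / (α - 1)) ^ 2)
    (hR3 : R > (1 + 16 * α ^ 4 * M) ^ 2 / α ^ 2)
    (hR4 : R > 8 * α ^ 2 * M / Real.log α)
    (hR5 : 6 * α ^ 2 * C ^ 2 < (α - 1) * M * R)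
    (hR6 : R > 4 * α ^ 2 * M / (α - 1))
    (D : Set (ℝ × ℝ)) (r m φ : ℝ × ℝ → ℝ) (hsol : EFSol R D r m φ)
    (hic : CharIC R C M m₀ D r m φ)
    (hdata : ∀ v ≥ R,
      |pdv D r (-R, v) * φ (-R, v) + r (-R, v) * pdv D φ (-R, v)| ≤ Ct / v ^ 2) :
    ∀ p ∈ D,
      |pdv D r p * φ p + r p * pdv D φ p| ≤ (Ct + 16 * α ^ 4 * M * C) / p.2 ^ 2 := by
  have hR : 0 < R := by linarith
  have hα0 : 0 < α := by linarith
  have hR6' : 4 * α ^ 2 * M < R * (α - 1) := (div_lt_iff₀ (by linarith)).1 hR6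
  have hMR : 2 * M < R := by
    by_contra hcon
    push Not at hcon
    nlinarith [mul_le_mul_of_nonneg_right hcon (sub_nonneg.2 hα.le), sq_nonneg (α - 1)]
  have hlog : 0 < Real.log α := Real.log_pos hα
  have hR4' : Real.exp (2 * α ^ 2 * M / R) ≤ α := by
    rw [← Real.le_log_iff_exp_le hα0, div_le_iff₀ hR]
    have h1 := (div_lt_iff₀ hlog).1 hR4
    have : 0 < α ^ 2 * M := by positivity
    linarith
  -- `R ≥ 1` turns the hypothesis on `√R` into one on `R`
  have hR3' : 1 + 16 * α ^ 4 * M ≤ α * R := by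
    have h1 := (div_lt_iff₀ (by positivity)).1 hR3
    refine abs_le_of_sq_le_sq' ?_ (by positivity) |>.2
    nlinarith [mul_le_mul_of_nonneg_left hR1 (show 0 ≤ R * α ^ 2 by positivity)]
  rintro ⟨u, v⟩ hp
  have hgood := fun q hq =>
    good_all (p := q) hsol hic hα hC hM hR hMR hm₀.1 hR6' hR4' hR5 hR3' hq
  obtain ⟨hu, hv⟩ := hsol.subset hp
  simp only [mem_Iic, mem_Ici] at hu hv
  have hrow := mem_row hsol hic hp
  have h := abs_sub_le_of_deriv_le hu
    (fun s hs => hasDeriv_row (hsol.diff_chi _ (hrow s hs)) hrow)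
    (fun s hs => hasDeriv_inv_sq (k := 2 * α ^ 4 * M * C)
        (hasDeriv_row (hsol.diff_r _ (hrow s hs)) hrow) (hsol.rpos _ (hrow s hs)).ne') (by
      intro s hs
      have hs' := hrow s (Ioo_subset_Icc_self hs)
      have h1 := nu_neg hsol hic hs'
      have h2 := lam_pos hsol hic hs'
      have h3 := wfac_le hsol hic hα hM hMR hm₀.1 hR6' hs' (hgood _ hs').1
      have h4 := lam_bound hsol hic hα hM hR hMR hm₀.1 hR6' hR4' hs'
        (fun t ht => (hgood _ (mem_row hsol hic hs' t ht)).1)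
      rw [hsol.chi_u hs']
      refine (source_bound (α := α) (hsol.rpos _ hs') (by positivity)
        (by rw [abs_of_pos h2]; exact h4) (wfac_nonneg hsol hic hMR hm₀.1 hs') h3
        (hgood _ hs').2.le).trans (le_of_eq ?_)
      rw [abs_of_neg h1]
      ring)
  rw [r_out hic hsol hv] at h
  have h0 : |chi D r φ (-R, v)| ≤ Ct / v ^ 2 := hdata v hv
  have h5 : 0 ≤ 2 * α ^ 4 * M * C / r (u, v) ^ 2 := by positivity
  have h6 := abs_sub_abs_le_abs_sub (chi D r φ (u, v)) (chi D r φ (-R, v))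
  rw [abs_sub_comm] at h6
  have h7 : Ct / v ^ 2 + 2 * α ^ 4 * M * C / v ^ 2 ≤ (Ct + 16 * α ^ 4 * M * C) / v ^ 2 := by
    rw [← add_div]
    gcongr
    norm_num
  change |chi D r φ (u, v)| ≤ _
  linarith
end

section
/- Bootstrap estimate for rφ: Fix α > 1 and R > (4α/(α−1))². Let (r, m, φ) be a solution on D satisfying the characteristic initial conditions with parameters C, M, m₀. Let (u, v) ∈ D be such that the segment [u, −R] × {v} is contained in D and |νφ + ζ|(ũ, v) ≤ 2αC·|ũ|^(−3/2) for all ũ ∈ [u, −R]. Then |rφ|(u, v) ≤ C·(1 + 4αR^(−1/2)) < αC. -/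
/-! The segment `[u, -R] × {v}` is parametrised by `s = -t ∈ [R, -u]`, running away from the ray
`u = -R`, where `|rφ| ≤ C`. Along it the derivative of `rφ` is `-(νφ + ζ)`, which the hypothesis
bounds by `2αC s^(-3/2)`, the derivative of the majorant `C + 4αC (R^(-1/2) - s^(-1/2))`.
Comparing `rφ` with this majorant (a Gronwall-type mean value inequality) and dropping the
negative term gives the first inequality. The second is `4α R^(-1/2) < α - 1`, i.e.
`√R > 4α / (α - 1)`. -/

open Set Real

open Set Real

/-- Chain rule along an ingoing ray. The derivative is taken within the segment, because `D` need not
contain a neighbourhood of its points. -/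
theorem hasDerivWithinAt_ray {D : Set (ℝ × ℝ)} {f : ℝ × ℝ → ℝ} (hf : ContDiffOn ℝ 2 f D)
    {a b v : ℝ} (hseg : ∀ s ∈ Icc a b, ((-s, v) : ℝ × ℝ) ∈ D) {s : ℝ} (hs : s ∈ Icc a b) :
    HasDerivWithinAt (fun s => f (-s, v)) (-pdu D f (-s, v)) (Icc a b) s := by
  have h1 : HasFDerivWithinAt f (fderivWithin ℝ f D (-s, v)) D (-s, v) :=
    ((hf.differentiableOn (by norm_num)) _ (hseg s hs)).hasFDerivWithinAt
  have h2 : HasDerivWithinAt (fun s : ℝ => ((-s, v) : ℝ × ℝ)) (-1, 0) (Icc a b) s :=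
    ((hasDerivAt_neg s).prodMk (hasDerivAt_const s v)).hasDerivWithinAt
  have h3 := h1.comp_hasDerivWithinAt s h2 (fun x hx => hseg x hx)
  have h4 : fderivWithin ℝ f D (-s, v) (-1, 0) = -pdu D f (-s, v) := by
    rw [pdu, ← map_neg]
    simp
  rwa [h4] at h3

/-- Bootstrap estimate for `rφ`.  With `α > 1` and
`R > (4α/(α-1))²`, if on the segment `[u,-R] × {v} ⊆ D` one has
`|νφ + ζ|(ũ,v) ≤ 2αC|ũ|^(-3/2)`, then
`|rφ|(u,v) ≤ C(1 + 4αR^(-1/2)) < αC`. -/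
theorem bootstrap_rphi (R C M m₀ α : ℝ) (hα : 1 < α) (hC : 0 < C)
    (hM : 0 < M) (hm₀ : m₀ ∈ Icc 0 M) (hR : R > (4 * α / (α - 1)) ^ 2)
    (D : Set (ℝ × ℝ)) (r m φ : ℝ × ℝ → ℝ) (hsol : EFSol R D r m φ)
    (hic : CharIC R C M m₀ D r m φ) (u v : ℝ) (huv : ((u, v) : ℝ × ℝ) ∈ D)
    (hseg : ∀ t ∈ Icc u (-R), ((t, v) : ℝ × ℝ) ∈ D)
    (hb : ∀ t ∈ Icc u (-R),
      |pdu D r (t, v) * φ (t, v) + r (t, v) * pdu D φ (t, v)|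
        ≤ 2 * α * C * |t| ^ (-(3 : ℝ) / 2)) :
    |r (u, v) * φ (u, v)| ≤ C * (1 + 4 * α * R ^ (-(1 : ℝ) / 2)) ∧
    C * (1 + 4 * α * R ^ (-(1 : ℝ) / 2)) < α * C := by
  have hα1 : 0 < α - 1 := by linarith
  have hR0 : 0 < R := lt_of_le_of_lt (sq_nonneg _) hR
  have hq : (u, v) ∈ Quad R := hsol.subset huv
  have huR : u ≤ -R := hq.1
  have hvR : R ≤ v := hq.2
  have hseg' : ∀ s ∈ Icc R (-u), ((-s, v) : ℝ × ℝ) ∈ D := fun s hs =>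
    hseg _ ⟨by linarith [hs.2], by linarith [hs.1]⟩
  have hg : ∀ s ∈ Icc R (-u), HasDerivWithinAt (fun s => r (-s, v) * φ (-s, v))
      (-(pdu D r (-s, v) * φ (-s, v) + r (-s, v) * pdu D φ (-s, v))) (Icc R (-u)) s := by
    intro s hs
    refine ((hasDerivWithinAt_ray hsol.hr hseg' hs).mul
      (hasDerivWithinAt_ray hsol.hphi hseg' hs)).congr_deriv ?_
    ring
  have hB : ∀ s ∈ Icc R (-u),
      HasDerivAt (fun s : ℝ => C + 4 * α * C * (R ^ (-(1 : ℝ) / 2) - s ^ (-(1 : ℝ) / 2)))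
        (2 * α * C * s ^ (-(3 : ℝ) / 2)) s := by
    intro s hs
    have hs0 : s ≠ 0 := (lt_of_lt_of_le hR0 hs.1).ne'
    have h := (((hasDerivAt_rpow_const (p := -(1 : ℝ) / 2) (Or.inl hs0)).const_sub
      (R ^ (-(1 : ℝ) / 2))).const_mul (4 * α * C)).const_add C
    refine h.congr_deriv ?_
    rw [show -(1 : ℝ) / 2 - 1 = -3 / 2 by norm_num]
    ring
  have key := image_norm_le_of_norm_deriv_right_le_deriv_boundary'
    (fun s hs => (hg s hs).continuousWithinAt)
    (fun s hs => (hg s (Ico_subset_Icc_self hs)).mono_of_mem_nhdsWithin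
      (Icc_mem_nhdsGE_of_mem hs))
    (by simpa using hic.rphi_bound v hvR)
    (fun s hs => (hB s hs).continuousAt.continuousWithinAt)
    (fun s hs => (hB s (Ico_subset_Icc_self hs)).hasDerivWithinAt)
    (fun s hs => by
      have hs0 : 0 < s := lt_of_lt_of_le hR0 hs.1
      have h := hb (-s) ⟨by linarith [hs.2], by linarith [hs.1]⟩
      rw [abs_neg, abs_of_pos hs0] at h
      rwa [norm_neg, Real.norm_eq_abs])
    (right_mem_Icc.2 (by linarith : R ≤ -u))
  constructor
  · have hu0 : 0 ≤ (-u) ^ (-(1 : ℝ) / 2) := rpow_nonneg (by linarith) _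
    have hnn : 0 ≤ 4 * α * C * (-u) ^ (-(1 : ℝ) / 2) :=
      mul_nonneg (by positivity) hu0
    simp only [neg_neg, Real.norm_eq_abs] at key
    linarith
  · have hsq : 4 * α / (α - 1) < √R := Real.lt_sqrt_of_sq_lt hR
    have hsR : 0 < √R := Real.sqrt_pos.2 hR0
    have hrp : R ^ (-(1 : ℝ) / 2) = (√R)⁻¹ := by
      rw [Real.sqrt_eq_rpow, ← Real.rpow_neg hR0.le]
      norm_num
    have hlt : 4 * α * (√R)⁻¹ < α - 1 := by
      rw [div_lt_iff₀ hα1] at hsq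
      rw [← div_eq_mul_inv, div_lt_iff₀ hsR]
      linarith
    rw [hrp, mul_comm α C]
    exact mul_lt_mul_of_pos_left (by linarith) hC
end

section
/- Bootstrap estimate for νφ + ζ: Fix α > 1. Let (r, m, φ) be a solution on D satisfying the characteristic initial conditions with parameters C, M, m₀. Let (u, v) ∈ D be such that the segment {u} × [R, v] is contained in D, and suppose that on this segment: λ > 0, r ≥ R, |rφ| ≤ 2αC, −2α ≤ ν < 0, 1 − μ ≥ 1/(2α), and 0 ≤ m ≤ 2αM. Then |νφ + ζ|(u, v) ≤ (1 + 16α⁴M)·C/u²; moreover, if in addition R > α⁻²(1 + 16α⁴M)², then |νφ + ζ|(u, v) < αC·|u|^(−3/2). -/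
/-!
The proof rests on a cancellation. Put `F = νφ + ζ`. Since `∂_v φ = θ / r`, the equation
`∂_v ζ = -θν/r` cancels the term `ν ∂_v φ`, and the equation for `∂_v ν` leaves
`∂_v F = φ ∂_v ν = (rφ) · ν · (2λ/(1-μ)) · m / r³` (`hasDerivWithinAt_nuphizeta`).
The bootstrap assumptions bound each factor, so `|∂_v F| ≤ 32 α⁴ M C λ / r³`
(`abs_source_le`).  As `λ = ∂_v r`, the right-hand side is the `v`-derivative of
`-16 α⁴ M C / r²`, and comparison of `F` with
`C/u² + 16 α⁴ M C (1/r(u,R)² - 1/r²)` along `{u} × [R, v]` gives the first bound, because the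
data on `v = R` yield `F(u,R) = ∂_u(rφ)(u,R)`, of size at most `C/u²`, and
`r(u,R) = -u` (`r_ray_in`).

The second bound follows from the first: `|u| ≥ R > K²/α²` with `K = 1 + 16 α⁴ M` means
`K < α |u|^(1/2)`.
-/


open Set Real

open Set Real

/-- A relatively open subset of the quadrant has unique derivatives, so that `pdu` and `pdv` obey
the usual calculus up to and including the boundary rays. -/
lemma EFSol.uniqueDiffOn {R : ℝ} {D : Set (ℝ × ℝ)} {r m φ : ℝ × ℝ → ℝ}
    (h : EFSol R D r m φ) : UniqueDiffOn ℝ D := by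
  obtain ⟨U, hU, rfl⟩ := h.relOpen
  rw [inter_comm]
  exact ((uniqueDiffOn_Iic _).prod (uniqueDiffOn_Ici _)).inter hU

/-- Along a vertical segment inside `D`, `pdv` is the one-variable derivative. -/
lemma hasDerivWithinAt_pdv {D : Set (ℝ × ℝ)} {f : ℝ × ℝ → ℝ} {u t : ℝ} {I : Set ℝ}
    (hf : DifferentiableOn ℝ f D) (hI : ∀ s ∈ I, (u, s) ∈ D) (ht : t ∈ I) :
    HasDerivWithinAt (fun s => f (u, s)) (pdv D f (u, t)) I t := by
  have h1 : HasDerivWithinAt (fun s : ℝ => ((u, s) : ℝ × ℝ)) (0, 1) I t :=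
    (hasDerivWithinAt_const t I u).prodMk (hasDerivWithinAt_id t I)
  exact (hf _ (hI t ht)).hasFDerivWithinAt.comp_hasDerivWithinAt t h1 hI

/-- Along a horizontal segment inside `D`, `pdu` is the one-variable derivative. -/
lemma hasDerivWithinAt_pdu {D : Set (ℝ × ℝ)} {f : ℝ × ℝ → ℝ} {t v : ℝ} {I : Set ℝ}
    (hf : DifferentiableOn ℝ f D) (hI : ∀ s ∈ I, (s, v) ∈ D) (ht : t ∈ I) :
    HasDerivWithinAt (fun s => f (s, v)) (pdu D f (t, v)) I t := by
  have h1 : HasDerivWithinAt (fun s : ℝ => ((s, v) : ℝ × ℝ)) (1, 0) I t :=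
    (hasDerivWithinAt_id t I).prodMk (hasDerivWithinAt_const t I v)
  exact (hf _ (hI t ht)).hasFDerivWithinAt.comp_hasDerivWithinAt t h1 hI

lemma differentiableOn_pdu {D : Set (ℝ × ℝ)} {f : ℝ × ℝ → ℝ} (hD : UniqueDiffOn ℝ D)
    (hf : ContDiffOn ℝ 2 f D) : DifferentiableOn ℝ (fun q => pdu D f q) D := by
  have h : ContDiffOn ℝ 1 (fderivWithin ℝ f D) D := hf.fderivWithin hD (by norm_num)
  exact (h.differentiableOn (by norm_num)).clm_apply (differentiableOn_const _)

/-- The normalisation `ν = -1` on the ray `v = R` forces `r(u, R) = -u`. -/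
lemma r_ray_in {R C M m₀ : ℝ} {D : Set (ℝ × ℝ)} {r m φ : ℝ × ℝ → ℝ}
    (hsol : EFSol R D r m φ) (hic : CharIC R C M m₀ D r m φ) {u : ℝ} (hu : u ≤ -R) :
    r (u, R) = -u := by
  have hd : ∀ s ∈ Icc u (-R),
      HasDerivWithinAt (fun s => r (s, R) + s) 0 (Icc u (-R)) s := by
    intro s hs
    have h := (hasDerivWithinAt_pdu (v := R) (hsol.hr.differentiableOn (by norm_num))
      (fun s hs => hic.ray_in s (mem_Icc.1 hs).2) hs).add (hasDerivWithinAt_id s _)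
    rw [hic.nu_one s hs.2] at h
    exact h.congr_deriv (by norm_num)
  have hc := constant_of_has_deriv_right_zero
    (fun s hs => (hd s hs).continuousWithinAt)
    (fun s hs => (hd s (Ico_subset_Icc_self hs)).mono_of_mem_nhdsWithin
      (Icc_mem_nhdsGE_of_mem hs))
    (-R) (right_mem_Icc.2 hu)
  simp only [hic.r_corner] at hc
  linarith

/-- The Leibniz rule: `∂_u(rφ) = νφ + ζ`. -/
lemma pdu_mul_eq {D : Set (ℝ × ℝ)} {r φ : ℝ × ℝ → ℝ} (hD : UniqueDiffOn ℝ D) {p : ℝ × ℝ}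
    (hp : p ∈ D) (hr : DifferentiableOn ℝ r D) (hφ : DifferentiableOn ℝ φ D) :
    pdu D (fun q => r q * φ q) p = pdu D r p * φ p + r p * pdu D φ p := by
  unfold pdu
  rw [fderivWithin_fun_mul (hD p hp) (hr p hp) (hφ p hp)]
  simp only [add_apply, smul_apply, smul_eq_mul]
  ring

/-- The cancellation behind the estimate: the `θ`-terms of `∂_v(νφ + ζ)` drop out, which leaves
`φ ∂_v ν`. -/
lemma hasDerivWithinAt_nuphizeta {R : ℝ} {D : Set (ℝ × ℝ)} {r m φ : ℝ × ℝ → ℝ}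
    (hsol : EFSol R D r m φ) {u t : ℝ} {I : Set ℝ}
    (hI : ∀ s ∈ I, ((u, s) : ℝ × ℝ) ∈ D) (ht : t ∈ I) :
    HasDerivWithinAt
      (fun s => pdu D r (u, s) * φ (u, s) + r (u, s) * pdu D φ (u, s))
      (pdu D r (u, t) * (2 * pdv D r (u, t) / (1 - 2 * m (u, t) / r (u, t)))
        * (m (u, t) / r (u, t) ^ 2) * φ (u, t)) I t := by
  have hD := hsol.uniqueDiffOn
  have hr := hsol.hr.differentiableOn (by norm_num)
  have hφ := hsol.hphi.differentiableOn (by norm_num)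
  have hν := hasDerivWithinAt_pdv (differentiableOn_pdu hD hsol.hr) hI ht
  have hζ := hasDerivWithinAt_pdv (hr.fun_mul (differentiableOn_pdu hD hsol.hphi)) hI ht
  have h := (hν.mul (hasDerivWithinAt_pdv hφ hI ht)).add hζ
  rw [hsol.eq_nu _ (hI t ht), hsol.eq_zeta _ (hI t ht)] at h
  refine h.congr_deriv ?_
  have hr0 : r (u, t) ≠ 0 := (hsol.rpos _ (hI t ht)).ne'
  have hcancel : -(r (u, t) * pdv D φ (u, t)) * pdu D r (u, t) / r (u, t)
      = -(pdu D r (u, t) * pdv D φ (u, t)) := by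
    field_simp
  rw [hcancel]
  ring

/-- The bootstrap bounds, with `ρ, l, n, k, p, d` standing for `r, λ, ν, m, φ, 1-μ` at a point,
control the source term of the transport equation for `νφ + ζ`. -/
lemma abs_source_le {α C M ρ l n k p d : ℝ} (hα : 1 < α) (hρ : 0 < ρ) (hl : 0 < l)
    (hp : |ρ * p| ≤ 2 * α * C) (hn : -(2 * α) ≤ n) (hn0 : n < 0) (hd : 1 / (2 * α) ≤ d)
    (hk0 : 0 ≤ k) (hk : k ≤ 2 * α * M) :
    |n * (2 * l / d) * (k / ρ ^ 2) * p| ≤ 32 * α ^ 4 * M * C * (l / ρ ^ 3) := by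
  have hα0 : 0 < α := by linarith
  have hd0 : 0 < d := lt_of_lt_of_le (by positivity) hd
  have hdi : 1 / d ≤ 2 * α := (one_div_le hd0 (by positivity)).2 hd
  have hn' : |n| ≤ 2 * α := by rw [abs_of_neg hn0]; linarith
  have hC : 0 ≤ 2 * α * C := (abs_nonneg _).trans hp
  have hM : 0 ≤ 2 * α * M := hk0.trans hk
  have e : n * (2 * l / d) * (k / ρ ^ 2) * p = (n * (1 / d) * k * (ρ * p)) * (2 * (l / ρ ^ 3)) := by
    field_simp
  rw [e, abs_mul, abs_mul, abs_mul, abs_mul, abs_of_nonneg hk0,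
    abs_of_pos (by positivity : 0 < 1 / d), abs_of_pos (by positivity : 0 < 2 * (l / ρ ^ 3))]
  calc |n| * (1 / d) * k * |ρ * p| * (2 * (l / ρ ^ 3))
      ≤ (2 * α) * (2 * α) * (2 * α * M) * (2 * α * C) * (2 * (l / ρ ^ 3)) := by gcongr
    _ = 32 * α ^ 4 * M * C * (l / ρ ^ 3) := by ring

/-- For `|u| ≥ R > K²/α²` the decay rate `K C/u²` beats `α C |u|^(-3/2)`. -/
lemma decay_lt {R C K α u : ℝ} (hα : 0 < α) (hC : 0 < C) (hR : 0 < R)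
    (hu : u ≤ -R) (h : K ^ 2 / α ^ 2 < R) :
    K * C / u ^ 2 < α * C * |u| ^ (-(3 : ℝ) / 2) := by
  have hu0 : 0 < |u| := abs_pos.2 (by linarith)
  have hRu : R ≤ |u| := by rw [abs_of_neg (by linarith)]; linarith
  have hroot : K < α * √|u| := by
    have : K / α < √|u| := Real.lt_sqrt_of_sq_lt (by rw [div_pow]; linarith)
    rw [div_lt_iff₀ hα] at this
    linarith
  have hpow : |u| ^ (-(3 : ℝ) / 2) = √|u| / u ^ 2 := by
    rw [show (-(3 : ℝ) / 2) = 1 / 2 - (2 : ℕ) by norm_num, Real.rpow_sub_natCast hu0.ne',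
      ← Real.sqrt_eq_rpow, sq_abs]
  have hu2 : 0 < u ^ 2 := by rw [← sq_abs]; positivity
  rw [hpow, ← mul_div_assoc, div_lt_div_iff_of_pos_right hu2]
  nlinarith

/-- Bootstrap estimate for `νφ + ζ`.  With `α > 1`, if on the
segment `{u} × [R,v] ⊆ D` one has `λ > 0`, `r ≥ R`, `|rφ| ≤ 2αC`,
`-2α ≤ ν < 0`, `1-μ ≥ 1/(2α)` and `0 ≤ m ≤ 2αM`, then
`|νφ + ζ|(u,v) ≤ (1 + 16α⁴M)C/u²`; if moreover `R > α⁻²(1 + 16α⁴M)²`, then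
`|νφ + ζ|(u,v) < αC|u|^(-3/2)`. -/
theorem bootstrap_nuphizeta (R C M m₀ α : ℝ) (hα : 1 < α) (hC : 0 < C)
    (hM : 0 < M) (hm₀ : m₀ ∈ Icc 0 M) (hR : 0 < R)
    (D : Set (ℝ × ℝ)) (r m φ : ℝ × ℝ → ℝ) (hsol : EFSol R D r m φ)
    (hic : CharIC R C M m₀ D r m φ) (u v : ℝ) (huv : ((u, v) : ℝ × ℝ) ∈ D)
    (hseg : ∀ t ∈ Icc R v, ((u, t) : ℝ × ℝ) ∈ D)
    (hcond : ∀ t ∈ Icc R v,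
      0 < pdv D r (u, t) ∧ R ≤ r (u, t) ∧
      |r (u, t) * φ (u, t)| ≤ 2 * α * C ∧
      (-(2 * α) ≤ pdu D r (u, t) ∧ pdu D r (u, t) < 0) ∧
      1 / (2 * α) ≤ 1 - 2 * m (u, t) / r (u, t) ∧
      (0 ≤ m (u, t) ∧ m (u, t) ≤ 2 * α * M)) :
    |pdu D r (u, v) * φ (u, v) + r (u, v) * pdu D φ (u, v)|
      ≤ (1 + 16 * α ^ 4 * M) * C / u ^ 2 ∧
    (R > (1 + 16 * α ^ 4 * M) ^ 2 / α ^ 2 →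
      |pdu D r (u, v) * φ (u, v) + r (u, v) * pdu D φ (u, v)|
        < α * C * |u| ^ (-(3 : ℝ) / 2)) := by
  have hQ := hsol.subset huv
  have hu : u ≤ -R := hQ.1
  have hv : R ≤ v := hQ.2
  have hα0 : 0 < α := by linarith
  have hr := hsol.hr.differentiableOn (by norm_num)
  have hφ := hsol.hphi.differentiableOn (by norm_num)
  have hray := r_ray_in hsol hic hu
  have hrpos : ∀ t ∈ Icc R v, 0 < r (u, t) := fun t ht => hsol.rpos _ (hseg t ht)
  have hF := fun t (ht : t ∈ Icc R v) => hasDerivWithinAt_nuphizeta hsol hseg ht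
  -- The barrier: its initial value is the bound on the data, its derivative the source bound.
  have hB : ∀ t ∈ Icc R v, HasDerivWithinAt
      (fun s => C / u ^ 2 + 16 * α ^ 4 * M * C * (1 / u ^ 2 - (r (u, s) ^ 2)⁻¹))
      (32 * α ^ 4 * M * C * (pdv D r (u, t) / r (u, t) ^ 3)) (Icc R v) t := by
    intro t ht
    have h0 := (hrpos t ht).ne'
    have h := (((((hasDerivWithinAt_pdv hr hseg ht).fun_pow 2).fun_inv (pow_ne_zero 2 h0)).const_sub
      (1 / u ^ 2)).const_mul (16 * α ^ 4 * M * C)).const_add (C / u ^ 2)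
    refine h.congr_deriv ?_
    field_simp
    norm_num
    ring
  have key := image_norm_le_of_norm_deriv_right_le_deriv_boundary'
    (fun t ht => (hF t ht).continuousWithinAt)
    (fun t ht => (hF t (Ico_subset_Icc_self ht)).mono_of_mem_nhdsWithin
      (Icc_mem_nhdsGE_of_mem ht))
    (by
      have h := hic.durphi_bound u hu
      rw [pdu_mul_eq hsol.uniqueDiffOn (hic.ray_in u hu) hr hφ] at h
      simpa [hray] using h)
    (fun t ht => (hB t ht).continuousWithinAt)
    (fun t ht => (hB t (Ico_subset_Icc_self ht)).mono_of_mem_nhdsWithin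
      (Icc_mem_nhdsGE_of_mem ht))
    (by
      intro t ht
      obtain ⟨h1, -, h3, ⟨h4, h5⟩, h6, h7, h8⟩ := hcond t (Ico_subset_Icc_self ht)
      exact abs_source_le hα (hrpos t (Ico_subset_Icc_self ht)) h1 h3 h4 h5 h6 h7 h8)
    (right_mem_Icc.2 hv)
  have main : |pdu D r (u, v) * φ (u, v) + r (u, v) * pdu D φ (u, v)|
      ≤ (1 + 16 * α ^ 4 * M) * C / u ^ 2 := by
    refine key.trans ?_
    have : 0 ≤ 16 * α ^ 4 * M * C * (r (u, v) ^ 2)⁻¹ := by positivity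
    have e : (1 + 16 * α ^ 4 * M) * C / u ^ 2
        = C / u ^ 2 + 16 * α ^ 4 * M * C * (1 / u ^ 2) := by ring
    rw [e, mul_sub]
    linarith
  exact ⟨main, fun h => main.trans_lt (decay_lt hα0 hC hR hu h)⟩
end
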